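/- arXiv:1903.03880 — 3 statements merged into one kernel-verified Lean document; each statement's English description precedes it below -/
import Mathlib

section
/- Let n be a nonempty finite type and let ρ ∈ Matrix n n ℂ be Hermitian with Tr ρ = 1. Then (‖ρ‖₁ - 1)/2 is the least element of the set {s : ℝ | s ≥ 0 ∧ ∃ δ τ ∈ Matrix n n ℂ, δ and τ are density matrices and ρ = (1+s) • δ - s • τ}. In other words, the robustness of non-Markovianity of ρ (the minimal amount s of Markovian noise τ whose admixture (ρ + s·τ)/(1+s) is Markovian) admits the closed-form expression (‖ρ‖₁ - 1)/2, and the minimum is attained. -/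
open Matrix
open scoped ComplexOrder

open scoped MatrixOrder in
/-- The trace norm of a matrix: the trace of the positive semidefinite square root of `AᴴA`. -/
noncomputable def traceNorm {n : Type*} [Fintype n] [DecidableEq n] (A : Matrix n n ℂ) : ℝ :=
  ((CFC.sqrt (Aᴴ * A)).trace).re

/-- A density matrix: positive semidefinite with unit trace. -/
def IsDensityMatrix {n : Type*} [Fintype n] (ρ : Matrix n n ℂ) : Prop :=
  ρ.PosSemidef ∧ ρ.trace = 1

/-!
Write `ρ = ρ⁺ - ρ⁻` with `ρ⁺` and `ρ⁻` the positive and negative parts. Since `Tr ρ = 1`, the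
robustness `(‖ρ‖₁ - 1) / 2` is `Tr ρ⁻`, and normalising `ρ⁺` and `ρ⁻` gives a decomposition with
this value of `s`. Conversely `ρ = (1 + s) δ - s τ` gives `-ρ ≤ s τ`, and among positive
semidefinite matrices dominating `-ρ` the negative part `ρ⁻` has the smallest trace: if `E` is the
spectral projection of `-ρ` onto its positive eigenvalues and `P ≥ 0`, `P ≥ -ρ`, then
`Tr ρ⁻ = Tr (E (-ρ)) ≤ Tr (E P) ≤ Tr P`.
-/

section PosPart

open scoped MatrixOrder

variable {n 𝕜 : Type*} [Fintype n] [RCLike 𝕜]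

theorem trace_mul_nonneg {A B : Matrix n n 𝕜} (hA : 0 ≤ A) (hB : 0 ≤ B) :
    0 ≤ (A * B).trace := by
  classical
  obtain ⟨C, rfl⟩ := CStarAlgebra.nonneg_iff_eq_star_mul_self.mp hB
  have trace_eq : (A * (star C * C)).trace = (C * A * Cᴴ).trace := by
    rw [← mul_assoc, trace_mul_comm, ← mul_assoc, star_eq_conjTranspose]
  rw [trace_eq]
  exact (hA.posSemidef.mul_mul_conjTranspose_same C).trace_nonneg

variable [DecidableEq n]

theorem exists_nonneg_le_one_mul_eq_posPart {A : Matrix n n 𝕜} (hA : A.IsHermitian) :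
    ∃ E : Matrix n n 𝕜, 0 ≤ E ∧ E ≤ 1 ∧ E * A = A⁺ := by
  have cont (f : ℝ → ℝ) : ContinuousOn f (spectrum ℝ A) := A.finite_real_spectrum.continuousOn f
  let χ : ℝ → ℝ := (Set.Ioi 0).indicator 1
  have χ_nonneg (x : ℝ) : 0 ≤ χ x := Set.indicator_nonneg (fun _ _ => zero_le_one) x
  have χ_le_one (x : ℝ) : χ x ≤ 1 := Set.indicator_le_self' (fun _ _ => zero_le_one) x
  have χ_mul_self (x : ℝ) : χ x * x = x⁺ := by
    rcases le_or_gt x 0 with hx | hx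
    · simp [χ, hx, hx.not_gt]
    · simp [χ, hx, hx.le]
  refine ⟨cfc χ A, cfc_nonneg fun x _ => χ_nonneg x, cfc_le_one _ _ fun x _ => χ_le_one x, ?_⟩
  calc cfc χ A * A = cfc χ A * cfc (fun x : ℝ => x) A := by rw [cfc_id' ℝ A hA.isSelfAdjoint]
    _ = cfc (fun x => χ x * x) A := (cfc_mul _ _ A (cont _) (cont _)).symm
    _ = cfc (fun x : ℝ => x⁺) A := by simp only [χ_mul_self]
    _ = A⁺ := by rw [CFC.posPart_def, cfcₙ_eq_cfc]

theorem trace_posPart_le {A P : Matrix n n 𝕜} (hP : 0 ≤ P) (hAP : A ≤ P) :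
    A⁺.trace ≤ P.trace := by
  have hA : A.IsHermitian := by
    simpa using hP.posSemidef.isHermitian.sub (le_iff.mp hAP).isHermitian
  obtain ⟨E, hE, hE_le, hEA⟩ := exists_nonneg_le_one_mul_eq_posPart hA
  calc A⁺.trace = (E * A).trace := by rw [hEA]
    _ ≤ (E * P).trace := by
      rw [← sub_nonneg, ← trace_sub, ← mul_sub]
      exact trace_mul_nonneg hE (sub_nonneg.mpr hAP)
    _ ≤ P.trace := by
      rw [← sub_nonneg, ← trace_sub, ← one_sub_mul]
      exact trace_mul_nonneg (sub_nonneg.mpr hE_le) hP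

theorem trace_negPart_le {A P : Matrix n n 𝕜} (hP : 0 ≤ P) (hAP : -A ≤ P) :
    A⁻.trace ≤ P.trace := by
  rw [← CFC.posPart_neg]
  exact trace_posPart_le hP hAP

theorem posSemidef_posPart (A : Matrix n n 𝕜) : A⁺.PosSemidef :=
  (CFC.posPart_nonneg A).posSemidef

theorem posSemidef_negPart (A : Matrix n n 𝕜) : A⁻.PosSemidef :=
  (CFC.negPart_nonneg A).posSemidef

theorem traceNorm_eq_trace_add_two_mul_trace_negPart {A : Matrix n n ℂ} (hA : A.IsHermitian) :
    traceNorm A = A.trace.re + 2 * A⁻.trace.re := by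
  have abs_eq : CFC.abs A = A + 2 • A⁻ := by
    rw [← CFC.abs_sub_self A hA.isSelfAdjoint, add_sub_cancel]
  calc traceNorm A = (CFC.abs A).trace.re := rfl
    _ = A.trace.re + 2 * A⁻.trace.re := by
      rw [abs_eq, trace_add, trace_smul, Complex.add_re, Complex.re_nsmul, nsmul_eq_mul,
        Nat.cast_ofNat]

end PosPart

section DensityMatrix

variable {n : Type*} [Fintype n]

theorem isDensityMatrix_inv_re_trace_smul {P : Matrix n n ℂ} (hP : P.PosSemidef) (hP₀ : P ≠ 0) :
    IsDensityMatrix (P.trace.re⁻¹ • P) := by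
  obtain ⟨re_nonneg, im_eq⟩ := Complex.nonneg_iff.mp hP.trace_nonneg
  have trace_eq : (P.trace.re : ℂ) = P.trace := Complex.ext rfl im_eq
  refine ⟨hP.smul (inv_nonneg.mpr re_nonneg), ?_⟩
  rw [trace_smul, Complex.real_smul, Complex.ofReal_inv, trace_eq,
    inv_mul_cancel₀ (mt hP.trace_eq_zero_iff.mp hP₀)]

theorem exists_isDensityMatrix_eq_re_trace_smul [Nonempty n] {P : Matrix n n ℂ}
    (hP : P.PosSemidef) : ∃ δ : Matrix n n ℂ, IsDensityMatrix δ ∧ P = P.trace.re • δ := by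
  classical
  rcases eq_or_ne P 0 with rfl | hP₀
  · exact ⟨_, isDensityMatrix_inv_re_trace_smul PosSemidef.one one_ne_zero, by simp⟩
  · have hδ := isDensityMatrix_inv_re_trace_smul hP hP₀
    refine ⟨_, hδ, (smul_inv_smul₀ (fun h => ?_) P).symm⟩
    simpa [h] using hδ.2

end DensityMatrix

/-- The robustness of non-Markovianity of a Hermitian trace-one Choi matrix `ρ` — the least
`s ≥ 0` admitting a pseudo-mixture decomposition `ρ = (1+s)δ - sτ` with `δ, τ` density
matrices — equals `(‖ρ‖₁ - 1)/2`, and the minimum is attained. -/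
theorem robustness_closed_form {n : Type*} [Fintype n] [DecidableEq n] [Nonempty n]
    (ρ : Matrix n n ℂ) (hρ : ρ.IsHermitian) (htr : ρ.trace = 1) :
    IsLeast {s : ℝ | 0 ≤ s ∧ ∃ δ τ : Matrix n n ℂ, IsDensityMatrix δ ∧ IsDensityMatrix τ ∧
        ρ = (1 + s) • δ - s • τ}
      ((traceNorm ρ - 1) / 2) := by
  have robustness_eq : (traceNorm ρ - 1) / 2 = ρ⁻.trace.re := by
    rw [traceNorm_eq_trace_add_two_mul_trace_negPart hρ, htr, Complex.one_re]
    ring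
  have parts_sub : ρ⁺ - ρ⁻ = ρ := CFC.posPart_sub_negPart ρ hρ.isSelfAdjoint
  rw [robustness_eq]
  constructor
  · have trace_posPart : ρ⁺.trace.re = 1 + ρ⁻.trace.re := by
      rw [← sub_eq_iff_eq_add, ← Complex.sub_re, ← trace_sub, parts_sub, htr, Complex.one_re]
    obtain ⟨δ, hδ, posPart_eq⟩ := exists_isDensityMatrix_eq_re_trace_smul (posSemidef_posPart ρ)
    obtain ⟨τ, hτ, negPart_eq⟩ := exists_isDensityMatrix_eq_re_trace_smul (posSemidef_negPart ρ)
    refine ⟨(Complex.nonneg_iff.mp (posSemidef_negPart ρ).trace_nonneg).1, δ, τ, hδ, hτ, ?_⟩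
    rw [← trace_posPart, ← posPart_eq, ← negPart_eq, parts_sub]
  · rintro s ⟨hs, δ, τ, hδ, hτ, rho_eq⟩
    have neg_le : (s • τ - -ρ).PosSemidef := by
      rw [rho_eq, sub_neg_eq_add, add_sub_cancel]
      exact hδ.1.smul (by positivity)
    have trace_le := trace_negPart_le (hτ.1.smul hs).nonneg (le_iff.mpr neg_le)
    simpa [hτ.2] using (Complex.le_def.mp trace_le).1
end

section
/- Let n be a finite type, let Λ : Matrix n n ℂ →ₗ[ℂ] Matrix n n ℂ be Hermiticity-preserving (Λ(Xᴴ) = (Λ(X))ᴴ for all X), and let Γ : Matrix n n ℂ →ₗ[ℂ] Matrix n n ℂ be completely positive and trace-preserving. Then ‖ρ_{Γ∘Λ}‖₁ ≤ ‖ρ_Λ‖₁, where ρ_Θ denotes the normalized Choi matrix of Θ. Consequently, the robustness of non-Markovianity (‖ρ_Λ‖₁ - 1)/2 is monotone under left composition with Markovian (completely positive trace-preserving) maps: N_R(Γ∘Λ) ≤ N_R(Λ). -/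
/-!
A Hermitian matrix `A` splits as `A⁺ - A⁻` with `tr (A⁺ + A⁻) = ‖A‖₁`, while any other splitting
`A = P - Q` into positive semidefinite matrices has `‖A‖₁ ≤ tr (P + Q)`: in an eigenbasis of `A`,
each `|λᵢ| = |Pᵢᵢ - Qᵢᵢ|` is at most `Pᵢᵢ + Qᵢᵢ`. A positive trace-preserving map sends the first
kind of splitting to the second without changing the trace, so it contracts the trace norm of
Hermitian matrices. The theorem is the case of the map `id ⊗ Γ` at `ρ_Λ`, since
`ρ_{Γ ∘ Λ} = (id ⊗ Γ) ρ_Λ`.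
-/

open Matrix
open scoped ComplexOrder

/-- The blockwise application `id_m ⊗ Φ` of a linear map `Φ` on `Matrix n n ℂ`:
`((id_m ⊗ Φ)(Δ))((i,k),(j,l)) = (Φ(Δ_{i,j}))(k,l)` where `Δ_{i,j}(k,l) = Δ((i,k),(j,l))`
is the `(i,j)` block of `Δ`. -/
def idTensor (m : Type*) [Fintype m] {n : Type*} [Fintype n]
    (Φ : Matrix n n ℂ →ₗ[ℂ] Matrix n n ℂ) :
    Matrix (m × n) (m × n) ℂ →ₗ[ℂ] Matrix (m × n) (m × n) ℂ where
  toFun Δ := Matrix.of fun p q =>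
    (Φ (Matrix.of fun k l => Δ (p.1, k) (q.1, l))) p.2 q.2
  map_add' Δ Δ' := by
    have h : ∀ i j : m, (Matrix.of fun k l => (Δ + Δ') (i, k) (j, l))
        = (Matrix.of fun k l => Δ (i, k) (j, l))
          + (Matrix.of fun k l => Δ' (i, k) (j, l)) := by
      intro i j; ext k l; simp [Matrix.add_apply]
    ext ⟨i, k⟩ ⟨j, l⟩
    simp only [Matrix.of_apply, Matrix.add_apply]
    rw [← Matrix.add_apply, ← map_add, ← h]
    rfl
  map_smul' c Δ := by
    have h : ∀ i j : m, (Matrix.of fun k l => (c • Δ) (i, k) (j, l))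
        = c • (Matrix.of fun k l => Δ (i, k) (j, l)) := by
      intro i j; ext k l; simp [Matrix.smul_apply]
    ext ⟨i, k⟩ ⟨j, l⟩
    simp only [Matrix.of_apply, Matrix.smul_apply, RingHom.id_apply]
    rw [← Matrix.smul_apply, ← LinearMap.map_smul, ← h]
    rfl

/-- Complete positivity: `id_m ⊗ Φ` maps positive semidefinite matrices to positive
semidefinite matrices for every finite type `m`. -/
def IsCompletelyPositive {n : Type*} [Fintype n]
    (Φ : Matrix n n ℂ →ₗ[ℂ] Matrix n n ℂ) : Prop :=
  ∀ (m : Type) (_ : Fintype m) (Δ : Matrix (m × n) (m × n) ℂ),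
    Δ.PosSemidef → (idTensor m Φ Δ).PosSemidef

/-- Trace preservation. -/
def IsTracePreserving {n : Type*} [Fintype n]
    (Φ : Matrix n n ℂ →ₗ[ℂ] Matrix n n ℂ) : Prop :=
  ∀ X : Matrix n n ℂ, (Φ X).trace = X.trace

open Kronecker in
/-- The normalized Choi matrix `(1/card n) Σ_{i,j} E_{ij} ⊗ Θ(E_{ij})` of a linear map `Θ`. -/
noncomputable def choiMatrix {n : Type*} [Fintype n] [DecidableEq n]
    (Θ : Matrix n n ℂ →ₗ[ℂ] Matrix n n ℂ) : Matrix (n × n) (n × n) ℂ :=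
  ((Fintype.card n : ℂ)⁻¹) •
    ∑ i : n, ∑ j : n,
      (Matrix.single i j (1 : ℂ)) ⊗ₖ (Θ (Matrix.single i j (1 : ℂ)))

section TraceNorm

open scoped MatrixOrder

variable {m n : Type*} [Fintype m] [DecidableEq m] [Fintype n] [DecidableEq n]

lemma traceNorm_eq_sum_abs_eigenvalues {A : Matrix n n ℂ} (hA : A.IsHermitian) :
    traceNorm A = ∑ i, |hA.eigenvalues i| := by
  have habs : CFC.abs A = hA.cfc (‖·‖) := by
    rw [CFC.abs_eq_cfc_norm A hA, hA.cfc_eq]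
  calc
    traceNorm A = (CFC.abs A).trace.re := rfl
    _ = ∑ i, |hA.eigenvalues i| := by
      rw [habs, IsHermitian.cfc, Unitary.conjStarAlgAut_apply, trace_mul_cycle,
        Unitary.coe_star_mul_self, one_mul, trace_diagonal]
      simp

lemma traceNorm_eq_trace_posPart_add_negPart {A : Matrix n n ℂ} (hA : A.IsHermitian) :
    traceNorm A = (A⁺ + A⁻).trace.re := by
  rw [CFC.posPart_add_negPart A hA]
  rfl

lemma traceNorm_sub_le_trace_add {P Q : Matrix n n ℂ} (hP : P.PosSemidef) (hQ : Q.PosSemidef) :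
    traceNorm (P - Q) ≤ (P + Q).trace.re := by
  have hPQ : (P - Q).IsHermitian := hP.isHermitian.sub hQ.isHermitian
  let U : Matrix n n ℂ := hPQ.eigenvectorUnitary
  have diag_nonneg {R : Matrix n n ℂ} (hR : R.PosSemidef) (i : n) : 0 ≤ ((Uᴴ * R * U) i i).re :=
    (Complex.nonneg_iff.mp (hR.conjTranspose_mul_mul_same U).diag_nonneg).1
  have eigenvalue_eq (i : n) :
      hPQ.eigenvalues i = ((Uᴴ * P * U) i i).re - ((Uᴴ * Q * U) i i).re := by
    have hdiag := hPQ.conjStarAlgAut_star_eigenvectorUnitary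
    rw [Unitary.conjStarAlgAut_star_apply] at hdiag
    have hdiag_entry := congrArg Complex.re (congrFun₂ hdiag i i)
    simpa [U, Matrix.mul_sub, Matrix.sub_mul, star_eq_conjTranspose] using hdiag_entry.symm
  calc
    traceNorm (P - Q) = ∑ i, |hPQ.eigenvalues i| := traceNorm_eq_sum_abs_eigenvalues hPQ
    _ ≤ ∑ i, (((Uᴴ * P * U) i i).re + ((Uᴴ * Q * U) i i).re) := by
      gcongr with i
      rw [eigenvalue_eq, abs_le]
      constructor <;> linarith [diag_nonneg hP i, diag_nonneg hQ i]
    _ = (Uᴴ * (P + Q) * U).trace.re := by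
      simp [Matrix.trace, Matrix.mul_add, Matrix.add_mul]
    _ = (P + Q).trace.re := by
      rw [trace_mul_cycle, ← star_eq_conjTranspose,
        Unitary.mul_star_self_of_mem hPQ.eigenvectorUnitary.prop, one_mul]

lemma traceNorm_map_le {Φ : Matrix m m ℂ →ₗ[ℂ] Matrix n n ℂ}
    (hΦ_pos : ∀ P : Matrix m m ℂ, P.PosSemidef → (Φ P).PosSemidef)
    (hΦ_trace : ∀ P : Matrix m m ℂ, P.PosSemidef → (Φ P).trace ≤ P.trace)
    {A : Matrix m m ℂ} (hA : A.IsHermitian) :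
    traceNorm (Φ A) ≤ traceNorm A := by
  have hpos : (A⁺).PosSemidef := (CFC.posPart_nonneg A).posSemidef
  have hneg : (A⁻).PosSemidef := (CFC.negPart_nonneg A).posSemidef
  calc
    traceNorm (Φ A) = traceNorm (Φ (A⁺) - Φ (A⁻)) := by
      rw [← map_sub, CFC.posPart_sub_negPart A hA]
    _ ≤ (Φ (A⁺) + Φ (A⁻)).trace.re :=
      traceNorm_sub_le_trace_add (hΦ_pos _ hpos) (hΦ_pos _ hneg)
    _ = (Φ (A⁺ + A⁻)).trace.re := by rw [map_add]
    _ ≤ (A⁺ + A⁻).trace.re := (Complex.le_def.mp (hΦ_trace _ (hpos.add hneg))).1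
    _ = traceNorm A := (traceNorm_eq_trace_posPart_add_negPart hA).symm

end TraceNorm

section IdTensor

variable {m n : Type*} [Fintype m] [Fintype n] {Φ : Matrix n n ℂ →ₗ[ℂ] Matrix n n ℂ}

-- `IsCompletelyPositive` quantifies over ancillas in `Type` only; an ancilla in another universe
-- is relabelled by `Fin (card m)`.
lemma IsCompletelyPositive.posSemidef_idTensor (hΦ : IsCompletelyPositive Φ)
    {Δ : Matrix (m × n) (m × n) ℂ} (hΔ : Δ.PosSemidef) : (idTensor m Φ Δ).PosSemidef := by
  let e : m ≃ Fin (Fintype.card m) := Fintype.equivFin m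
  have relabel : idTensor m Φ Δ =
      (idTensor (Fin (Fintype.card m)) Φ
        (Δ.submatrix (Prod.map e.symm id) (Prod.map e.symm id))).submatrix
          (Prod.map e id) (Prod.map e id) := by
    ext p q
    simp [idTensor]
  rw [relabel]
  exact (hΦ _ _ _ (hΔ.submatrix _)).submatrix _

lemma IsTracePreserving.trace_idTensor (hΦ : IsTracePreserving Φ)
    (Δ : Matrix (m × n) (m × n) ℂ) : (idTensor m Φ Δ).trace = Δ.trace := by
  simp only [Matrix.trace, Matrix.diag_apply, Fintype.sum_prod_type]
  exact Finset.sum_congr rfl fun i _ => hΦ (Matrix.of fun k l => Δ (i, k) (i, l))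

end IdTensor

section ChoiMatrix

variable {n : Type*} [Fintype n] [DecidableEq n]

lemma choiMatrix_apply (Θ : Matrix n n ℂ →ₗ[ℂ] Matrix n n ℂ) (p q : n × n) :
    choiMatrix Θ p q = (Fintype.card n : ℂ)⁻¹ * Θ (Matrix.single p.1 q.1 1) p.2 q.2 := by
  simp [choiMatrix, Matrix.sum_apply, Matrix.single_apply, ite_and]

lemma isHermitian_choiMatrix {Θ : Matrix n n ℂ →ₗ[ℂ] Matrix n n ℂ}
    (hΘ : ∀ X : Matrix n n ℂ, Θ Xᴴ = (Θ X)ᴴ) : (choiMatrix Θ).IsHermitian := by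
  ext p q
  have hpq : Θ (Matrix.single p.1 q.1 1) = (Θ (Matrix.single q.1 p.1 1))ᴴ := by
    rw [← hΘ, conjTranspose_single, star_one]
  simp [choiMatrix_apply, hpq]

lemma choiMatrix_comp (Γ Λ : Matrix n n ℂ →ₗ[ℂ] Matrix n n ℂ) :
    choiMatrix (Γ ∘ₗ Λ) = idTensor n Γ (choiMatrix Λ) := by
  ext p q
  have block_eq : (Matrix.of fun k l => choiMatrix Λ (p.1, k) (q.1, l)) =
      (Fintype.card n : ℂ)⁻¹ • Λ (Matrix.single p.1 q.1 1) := by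
    ext k l
    simp [choiMatrix_apply]
  rw [choiMatrix_apply]
  simp [idTensor, block_eq]

end ChoiMatrix

/-- Monotonicity of the robustness of non-Markovianity under left composition with a
Markovian (completely positive trace-preserving) map: the trace norm of the Choi matrix does
not increase, and hence neither does `N_R = (‖ρ_Λ‖₁ - 1)/2`. -/
theorem robustness_monotone_comp {n : Type*} [Fintype n] [DecidableEq n]
    (Λ Γ : Matrix n n ℂ →ₗ[ℂ] Matrix n n ℂ)
    (hΛ : ∀ X : Matrix n n ℂ, Λ Xᴴ = (Λ X)ᴴ)
    (hΓCP : IsCompletelyPositive Γ) (hΓTP : IsTracePreserving Γ) :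
    traceNorm (choiMatrix (Γ ∘ₗ Λ)) ≤ traceNorm (choiMatrix Λ) ∧
      (traceNorm (choiMatrix (Γ ∘ₗ Λ)) - 1) / 2 ≤ (traceNorm (choiMatrix Λ) - 1) / 2 := by
  have h : traceNorm (choiMatrix (Γ ∘ₗ Λ)) ≤ traceNorm (choiMatrix Λ) := by
    rw [choiMatrix_comp]
    exact traceNorm_map_le (fun _ hP => hΓCP.posSemidef_idTensor hP)
      (fun P _ => (hΓTP.trace_idTensor P).le) (isHermitian_choiMatrix hΛ)
  exact ⟨h, by linarith⟩
end

section
/- Let n be a nonempty finite type and let ρ ∈ Matrix n n ℂ be Hermitian with Tr ρ = 1. Then there exists a matrix X ∈ Matrix n n ℂ such that X is positive semidefinite, 1 - X is positive semidefinite, Re Tr(ρ · X) = (1 + ‖ρ‖₁)/2, and Re Tr(δ · X) ≤ 1 for every density matrix δ ∈ Matrix n n ℂ. In particular, when ρ is the Choi matrix of a non-Markovian map, X is a witness achieving the discrimination-advantage ratio 1 + N_R(ρ) = (1 + ‖ρ‖₁)/2 against all Markovian Choi matrices δ. -/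
/-! For `X` the spectral projection of `ρ` onto its nonnegative eigenvalues, `ρ * X` is the positive
part `ρ⁺ = (ρ + |ρ|) / 2`, whose trace is `(1 + ‖ρ‖₁) / 2`. The bound against density matrices comes
from `X ≤ 1`, as the trace pairing with a positive semidefinite matrix is monotone. -/

open Matrix
open scoped ComplexOrder

/-- The spectral projection `1_{[0, ∞)}(a)` of a self-adjoint `a` onto the nonnegative part of its
spectrum, the optimal witness for the discrimination problem. It is encoded through the continuous
functional calculus, so it is the junk value `0` unless `a` is self-adjoint and the indicator is
continuous on its spectrum, which is automatic when the spectrum is finite. -/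
noncomputable def nonnegSpectralProj {A : Type*} [Ring A] [StarRing A] [TopologicalSpace A]
    [Algebra ℝ A] [ContinuousFunctionalCalculus ℝ A IsSelfAdjoint] (a : A) : A :=
  cfc ((Set.Ici (0 : ℝ)).indicator 1) a

section nonnegSpectralProj

variable {A : Type*} [Ring A] [StarRing A] [TopologicalSpace A] [Algebra ℝ A]
  [ContinuousFunctionalCalculus ℝ A IsSelfAdjoint]

lemma mul_nonnegSpectralProj [T2Space A] {a : A} (ha : IsSelfAdjoint a)
    (hcont : ContinuousOn ((Set.Ici (0 : ℝ)).indicator 1 : ℝ → ℝ) (spectrum ℝ a)) :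
    a * nonnegSpectralProj a = a⁺ := by
  have hmul (x : ℝ) : x * (Set.Ici (0 : ℝ)).indicator 1 x = x⁺ := by
    rcases le_or_gt 0 x with hx | hx
    · simp [hx]
    · simp [hx.le, hx.not_ge]
  calc
    a * nonnegSpectralProj a = cfc (fun x : ℝ => x * (Set.Ici (0 : ℝ)).indicator 1 x) a := by
      rw [cfc_mul (fun x : ℝ => x) _ a, cfc_id' ℝ a, nonnegSpectralProj]
    _ = cfc (·⁺ : ℝ → ℝ) a := cfc_congr fun x _ => hmul x
    _ = a⁺ := by rw [CFC.posPart_def, cfcₙ_eq_cfc]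

variable [PartialOrder A] [StarOrderedRing A]

lemma nonnegSpectralProj_nonneg (a : A) : 0 ≤ nonnegSpectralProj a :=
  cfc_nonneg fun _ _ => Set.indicator_nonneg (fun _ _ => zero_le_one) _

lemma nonnegSpectralProj_le_one (a : A) : nonnegSpectralProj a ≤ 1 :=
  cfc_le_one _ a fun _ _ => Set.indicator_le_self' (fun _ _ => zero_le_one) _

end nonnegSpectralProj

section Trace

open scoped MatrixOrder

variable {n : Type*} [Fintype n]

lemma trace_mul_le_trace_mul_of_nonneg {𝕜 : Type*} [RCLike 𝕜] {A B C : Matrix n n 𝕜}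
    (hA : 0 ≤ A) (hBC : B ≤ C) : (A * B).trace ≤ (A * C).trace := by
  classical
  obtain ⟨S, rfl⟩ := CStarAlgebra.nonneg_iff_eq_star_mul_self.mp hA
  have trace_conj (M : Matrix n n 𝕜) : (star S * S * M).trace = (S * M * star S).trace := by
    rw [Matrix.mul_assoc, trace_mul_comm]
  rw [trace_conj, trace_conj]
  exact OrderHomClass.mono (tracePositiveLinearMap n ℝ 𝕜) (star_right_conjugate_le_conjugate hBC S)

lemma traceNorm_eq_re_trace_abs [DecidableEq n] (A : Matrix n n ℂ) :
    traceNorm A = (CFC.abs A).trace.re :=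
  rfl

lemma re_trace_posPart [DecidableEq n] {A : Matrix n n ℂ} (hA : A.IsHermitian) :
    (A⁺).trace.re = (A.trace.re + traceNorm A) / 2 := by
  have habs : CFC.abs A + A = A⁺ + A⁺ := (CFC.abs_add_self A hA).trans (two_nsmul _)
  have htrace : traceNorm A + A.trace.re = (A⁺).trace.re + (A⁺).trace.re := by
    rw [traceNorm_eq_re_trace_abs, ← Complex.add_re, ← trace_add, habs, trace_add, Complex.add_re]
  linarith

lemma re_trace_mul_nonnegSpectralProj [DecidableEq n] {A : Matrix n n ℂ} (hA : A.IsHermitian) :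
    (A * nonnegSpectralProj A).trace.re = (A.trace.re + traceNorm A) / 2 := by
  rw [mul_nonnegSpectralProj hA (A.finite_real_spectrum.continuousOn _), re_trace_posPart hA]

end Trace

/-- The converse (witness) half of the state-discrimination interpretation: for any Hermitian
trace-one Choi matrix `ρ`, there is a witness `0 ≤ X ≤ I` achieving `Re Tr[ρX] = (1 + ‖ρ‖₁)/2`
while `Re Tr[δX] ≤ 1` for every Markovian (density-matrix) Choi matrix `δ`. -/
theorem state_discrimination_witness {n : Type*} [Fintype n] [DecidableEq n] [Nonempty n]
    (ρ : Matrix n n ℂ) (hρ : ρ.IsHermitian) (htr : ρ.trace = 1) :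
    ∃ X : Matrix n n ℂ, X.PosSemidef ∧ ((1 : Matrix n n ℂ) - X).PosSemidef ∧
      ((ρ * X).trace).re = (1 + traceNorm ρ) / 2 ∧
      ∀ δ : Matrix n n ℂ, IsDensityMatrix δ → ((δ * X).trace).re ≤ 1 := by
  open scoped MatrixOrder in
  have hle : nonnegSpectralProj ρ ≤ 1 := nonnegSpectralProj_le_one ρ
  refine ⟨nonnegSpectralProj ρ, (nonnegSpectralProj_nonneg ρ).posSemidef, hle, ?_, ?_⟩
  · rw [re_trace_mul_nonnegSpectralProj hρ, htr, Complex.one_re]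
  · intro δ ⟨hδ, hδtr⟩
    have htrace := trace_mul_le_trace_mul_of_nonneg hδ.nonneg hle
    rw [Matrix.mul_one, hδtr] at htrace
    exact (Complex.le_def.mp htrace).1
end
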